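/- arXiv:2308.07483 — 3 statements merged into one kernel-verified Lean document; each statement's English description precedes it below -/
import Mathlib

section
/- Let λ : ℝ → ℝ be twice differentiable and strictly positive on (0,∞), and let Λ : ℝ → ℝ be a function such that for all t > 0 both SIV vacuum equations hold: 3·(λ'(t)/λ(t))² = Λ(t) and 2·λ''(t)/λ(t) − (λ'(t)/λ(t))² = Λ(t). Define Λ_E(t) = Λ(t)/λ(t)². Then for all t > 0, Λ_E(t) = 3·λ'(t)²/λ(t)⁴, and Λ_E is constant on (0,∞), i.e. the derivative of t ↦ 3·λ'(t)²/λ(t)⁴ vanishes for every t > 0. -/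
/-- SIV gauge: from the pair of SIV vacuum equations (i) `3(λ'/λ)² = Λ` and
(ii) `2λ''/λ − (λ'/λ)² = Λ`, with `Λ_E = Λ/λ²`, one gets `Λ_E = 3λ'²/λ⁴`
and `Λ_E` is constant on `(0,∞)`. -/
theorem siv_gauge_lambdaE_constant
    (lam Λ : ℝ → ℝ)
    (hpos : ∀ t > (0 : ℝ), 0 < lam t)
    (hdiff : ∀ t > (0 : ℝ), DifferentiableAt ℝ lam t)
    (hdiff' : ∀ t > (0 : ℝ), DifferentiableAt ℝ (deriv lam) t)
    (heq1 : ∀ t > (0 : ℝ), 3 * (deriv lam t / lam t) ^ 2 = Λ t)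
    (heq2 : ∀ t > (0 : ℝ),
      2 * deriv (deriv lam) t / lam t - (deriv lam t / lam t) ^ 2 = Λ t) :
    (∀ t > (0 : ℝ), Λ t / (lam t) ^ 2 = 3 * (deriv lam t) ^ 2 / (lam t) ^ 4) ∧
    (∀ t > (0 : ℝ),
      deriv (fun s => 3 * (deriv lam s) ^ 2 / (lam s) ^ 4) t = 0) := by
  constructor
  · intro t ht
    have h := (hpos t ht).ne'
    rw [← heq1 t ht]
    field_simp
  · intro t ht
    have h := (hpos t ht).ne'
    have key : deriv (deriv lam) t * lam t = 2 * (deriv lam t) ^ 2 := by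
      have e := (heq2 t ht).trans (heq1 t ht).symm
      have e2 : deriv (deriv lam) t / lam t = 2 * (deriv lam t / lam t) ^ 2 := by
        rw [mul_div_assoc] at e
        linarith
      calc deriv (deriv lam) t * lam t
          = (deriv (deriv lam) t / lam t) * (lam t) ^ 2 := by field_simp
        _ = 2 * (deriv lam t) ^ 2 := by rw [e2]; field_simp
    have hd := (((hdiff' t ht).hasDerivAt.pow 2).const_mul 3).div
      ((hdiff t ht).hasDerivAt.pow 4) (pow_ne_zero 4 h)
    refine (HasDerivAt.deriv hd).trans ?_
    rw [div_eq_zero_iff]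
    left
    simp only [Pi.pow_apply]
    push_cast
    linear_combination (6 * deriv lam t * (lam t) ^ 3) * key
end

section
/- Let Λ_E > 0 be a real constant and set t₀ = √(3/Λ_E). Then the function λ(t) = t₀/t is strictly positive and twice differentiable on (0,∞), and with Λ(t) = λ(t)²·Λ_E it satisfies all four SIV vacuum equations for every t > 0: (i) 3(λ'(t)/λ(t))² = Λ(t), (ii) 2λ''(t)/λ(t) − (λ'(t)/λ(t))² = Λ(t), (iii) λ''(t)/λ(t) = 2(λ'(t)/λ(t))², and (iv) λ''(t)/λ(t) − (λ'(t)/λ(t))² = Λ(t)/3. -/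
open Real

/-- The SIV solution: `λ(t) = t₀/t` with `t₀ = √(3/Λ_E)` is positive and twice
differentiable on `(0,∞)` and, with `Λ(t) = λ(t)²·Λ_E`, satisfies all four SIV
vacuum equations. -/
theorem siv_solution_satisfies_vacuum_equations
    (ΛE : ℝ) (hΛE : 0 < ΛE) :
    let t₀ : ℝ := Real.sqrt (3 / ΛE)
    let lam : ℝ → ℝ := fun t => t₀ / t
    let Λ : ℝ → ℝ := fun t => (lam t) ^ 2 * ΛE
    ∀ t > (0 : ℝ),
      0 < lam t ∧
      DifferentiableAt ℝ lam t ∧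
      DifferentiableAt ℝ (deriv lam) t ∧
      3 * (deriv lam t / lam t) ^ 2 = Λ t ∧
      2 * deriv (deriv lam) t / lam t - (deriv lam t / lam t) ^ 2 = Λ t ∧
      deriv (deriv lam) t / lam t = 2 * (deriv lam t / lam t) ^ 2 ∧
      deriv (deriv lam) t / lam t - (deriv lam t / lam t) ^ 2 = Λ t / 3 := by
  intro t₀ lam Λ t ht
  have hpos : 0 < t₀ := Real.sqrt_pos.mpr (by positivity)
  have hsq : t₀ ^ 2 * ΛE = 3 := by
    have h : t₀ ^ 2 = 3 / ΛE := Real.sq_sqrt (by positivity)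
    rw [h]
    field_simp
  have hne : t ≠ 0 := ht.ne'
  have h1 : ∀ s : ℝ, s ≠ 0 → HasDerivAt lam (-t₀ / s ^ 2) s := by
    intro s hs
    have h := (hasDerivAt_const s t₀).div (hasDerivAt_id s) hs
    refine h.congr_deriv ?_
    simp
  have h2 : HasDerivAt (fun s : ℝ => -t₀ / s ^ 2) (2 * t₀ / t ^ 3) t := by
    have h := (hasDerivAt_const t (-t₀)).div (hasDerivAt_pow 2 t) (pow_ne_zero 2 hne)
    refine h.congr_deriv ?_
    field_simp
    norm_num
    ring
  have h3 : HasDerivAt (deriv lam) (2 * t₀ / t ^ 3) t := by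
    refine h2.congr_of_eventuallyEq ?_
    filter_upwards [isOpen_ne.mem_nhds hne] with s hs
    exact (h1 s hs).deriv
  have hl : lam t = t₀ / t := rfl
  have hL : Λ t = 3 / t ^ 2 := by
    change (t₀ / t) ^ 2 * ΛE = 3 / t ^ 2
    rw [← hsq]
    ring
  have ha : deriv lam t / lam t = -1 / t := by
    rw [(h1 t hne).deriv, hl]
    field_simp
  have hb : deriv (deriv lam) t / lam t = 2 / t ^ 2 := by
    rw [h3.deriv, hl]
    field_simp
  refine ⟨by rw [hl]; positivity, (h1 t hne).differentiableAt, h3.differentiableAt,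
    ?_, ?_, ?_, ?_⟩
  · rw [ha, hL]; ring
  · rw [mul_div_assoc, ha, hb, hL]; ring
  · rw [ha, hb]; ring
  · rw [ha, hb, hL]; ring
end

section
/- Let t₀ > 0, set Λ_E = 3/t₀² and λ(t) = t₀/t for t > 0. Then for every t > 0 the following two identities hold: (a) λ'(t)²/λ(t)² = Λ_E·λ(t)²/3, and (b) 2·λ''(t)/λ(t) − λ'(t)²/λ(t)² = Λ_E·λ(t)². Consequently, for any differentiable scale factor a : (0,∞) → (0,∞), any density ρ(t), pressure p(t), curvature constant k, and gravitational constant G > 0, the scale-invariant Friedmann equations 8πGρ/3 = k/a² + (a'/a)² + 2(a'λ')/(aλ) + (λ'/λ)² − Λ_E·λ²/3 and −8πGp = k/a² + 2a''/a + 2λ''/λ + (a'/a)² + 4(a'λ')/(aλ) − (λ'/λ)² − Λ_E·λ² hold at t if and only if the equations 8πGρ/3 = k/a² + (a'/a)² + 2(a'λ')/(aλ) and −8πGp = k/a² + 2a''/a + (a'/a)² + 4(a'λ')/(aλ) hold at t; i.e., in the SIV gauge the cosmological constant disappears from the cosmological equations. -/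
open Real

/-- In the SIV gauge `λ(t) = t₀/t`, `Λ_E = 3/t₀²`, the identities
(a) `λ'²/λ² = Λ_E·λ²/3` and (b) `2λ''/λ − λ'²/λ² = Λ_E·λ²` hold, and hence
the cosmological constant disappears from the scale-invariant Friedmann
equations. -/
theorem siv_gauge_friedmann_no_cosmological_constant
    (t₀ : ℝ) (ht₀ : 0 < t₀) :
    let ΛE : ℝ := 3 / t₀ ^ 2
    let lam : ℝ → ℝ := fun t => t₀ / t
    (∀ t > (0 : ℝ),
      (deriv lam t) ^ 2 / (lam t) ^ 2 = ΛE * (lam t) ^ 2 / 3 ∧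
      2 * deriv (deriv lam) t / lam t - (deriv lam t) ^ 2 / (lam t) ^ 2 =
        ΛE * (lam t) ^ 2) ∧
    (∀ (a ρ p : ℝ → ℝ) (k G : ℝ), 0 < G →
      (∀ s > (0 : ℝ), 0 < a s) → (∀ s > (0 : ℝ), DifferentiableAt ℝ a s) →
      ∀ t > (0 : ℝ),
        ((8 * π * G * ρ t / 3 =
            k / (a t) ^ 2 + (deriv a t / a t) ^ 2 +
              2 * (deriv a t * deriv lam t) / (a t * lam t) +
              (deriv lam t / lam t) ^ 2 - ΛE * (lam t) ^ 2 / 3 ∧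
          -(8 * π * G * p t) =
            k / (a t) ^ 2 + 2 * deriv (deriv a) t / a t +
              2 * deriv (deriv lam) t / lam t + (deriv a t / a t) ^ 2 +
              4 * (deriv a t * deriv lam t) / (a t * lam t) -
              (deriv lam t / lam t) ^ 2 - ΛE * (lam t) ^ 2) ↔
        (8 * π * G * ρ t / 3 =
            k / (a t) ^ 2 + (deriv a t / a t) ^ 2 +
              2 * (deriv a t * deriv lam t) / (a t * lam t) ∧
          -(8 * π * G * p t) =
            k / (a t) ^ 2 + 2 * deriv (deriv a) t / a t +
              (deriv a t / a t) ^ 2 +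
              4 * (deriv a t * deriv lam t) / (a t * lam t)))) := by
  intro ΛE lam
  have h1 : ∀ t : ℝ, 0 < t → deriv lam t = -t₀ / t ^ 2 := by
    intro t ht
    have h : HasDerivAt lam ((0 * t - t₀ * 1) / t ^ 2) t :=
      (hasDerivAt_const t t₀).div (hasDerivAt_id t) ht.ne'
    rw [h.deriv]
    ring
  have h2 : ∀ t : ℝ, 0 < t → deriv (deriv lam) t = 2 * t₀ / t ^ 3 := by
    intro t ht
    have he : deriv lam =ᶠ[nhds t] fun s => -t₀ / s ^ 2 := by
      filter_upwards [lt_mem_nhds ht] with s hs using h1 s hs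
    rw [he.deriv_eq]
    have h : HasDerivAt (fun s : ℝ => -t₀ / s ^ 2)
        ((0 * t ^ 2 - (-t₀) * (((2 : ℕ) : ℝ) * t ^ (2 - 1))) / (t ^ 2) ^ 2) t :=
      (hasDerivAt_const t (-t₀)).div (hasDerivAt_pow 2 t) (pow_ne_zero 2 ht.ne')
    rw [h.deriv]
    have := ht.ne'
    field_simp
    norm_num
    ring
  have key : ∀ t > (0 : ℝ),
      (deriv lam t) ^ 2 / (lam t) ^ 2 = ΛE * (lam t) ^ 2 / 3 ∧
      2 * deriv (deriv lam) t / lam t - (deriv lam t) ^ 2 / (lam t) ^ 2 =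
        ΛE * (lam t) ^ 2 := by
    intro t ht
    rw [h1 t ht, h2 t ht]
    have := ht.ne'
    have := ht₀.ne'
    simp only [lam, ΛE]
    constructor
    · field_simp
    · field_simp
      norm_num
  refine ⟨key, ?_⟩
  intro a ρ p k G _ _ _ t ht
  obtain ⟨ha, hb⟩ := key t ht
  rw [← div_pow] at ha hb
  constructor
  · rintro ⟨e1, e2⟩
    exact ⟨by linarith, by linarith⟩
  · rintro ⟨e1, e2⟩
    exact ⟨by linarith, by linarith⟩
end
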